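/- arXiv:2011.12480 — 2 statements merged into one kernel-verified Lean document; each statement's English description precedes it below -/
import Mathlib

section
/- Let G = (V,E) be a simple graph, v₀ ∈ V, τ ≥ 1, and write δ'(v) for the closed neighborhood of v (v together with its adjacent vertices). Let x : {0,…,τ} × V → {0,1} and y : {0,…,τ−1} × E' → {0,1} (where y^t_{uv} is defined for v ∈ δ'(u)) satisfy: (i) x⁰_{v₀} = 1; (ii) for every 0 ≤ t < τ and every v ∈ V, x^t_v = Σ_{i ∈ δ'(v)} y^t_{v i}; (iii) for every 0 < t ≤ τ and every v ∈ V, x^t_v = Σ_{j ∈ δ'(v)} y^{t−1}_{j v}; and (iv) Σ_{v ∈ V} x^τ_v = 1. Then for every t ∈ {0,…,τ} there is exactly one vertex π^t with x^t_{π^t} = 1, and the sequence (π⁰,…,π^τ) is a search path of length τ starting at v₀. Conversely, for every search path (π⁰,…,π^τ) starting at v₀ there exist binary x, y satisfying (i)–(iv) with x^t_v = 1 exactly when v = π^t. -/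
/-!
Read one time step as moving the mass `x t` to the mass `x (t + 1)` along edges. If the target is a
unit mass at `p`, nonnegativity kills all flow not ending in `p`, so every `u` sends its whole mass
`x t u` along the edge to `p`. Hence `x t` lives on the predecessors of `p` and has total mass `1`;
being `0`-`1` valued, it is a unit mass at some predecessor of `p`. Starting from the unit mass at
the goal, this propagates backwards in time and reveals the path.
-/

section Binary

variable {V R : Type*} [DecidableEq V] {f : V → R}

theorem eq_single_one_iff_of_binary [Zero R] [One R] [NeZero (1 : R)]
    (hf : ∀ v, f v = 0 ∨ f v = 1) {p : V} :
    f = Pi.single p 1 ↔ ∀ v, f v = 1 ↔ v = p := by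
  refine ⟨fun h v => by simp [h, Pi.single_apply], fun h => funext fun v => ?_⟩
  by_cases hv : v = p
  · rw [(h v).2 hv, hv, Pi.single_eq_same]
  · rw [Pi.single_eq_of_ne hv]
    exact (hf v).resolve_right (mt (h v).1 hv)

theorem exists_eq_single_one_of_finsum_eq_one [AddCommMonoidWithOne R] [CharZero R]
    (hf : ∀ v, f v = 0 ∨ f v = 1) (hsum : ∑ᶠ v, f v = 1) : ∃ p, f = Pi.single p 1 := by
  have hfin : f.support.Finite :=
    hasFiniteSupport_of_finsum_ne_zero (hsum ▸ one_ne_zero)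
  have hcard : (hfin.toFinset.card : R) = 1 := by
    have hone : ∀ v ∈ hfin.toFinset, f v = 1 := fun v hv =>
      (hf v).resolve_left (hfin.mem_toFinset.1 hv)
    rw [← hsum, finsum_eq_sum f hfin, Finset.sum_congr rfl hone, Finset.sum_const, nsmul_one]
  obtain ⟨p, hp⟩ := Finset.card_eq_one.1 (Nat.cast_eq_one.1 hcard)
  have hsupp (v : V) : f v ≠ 0 ↔ v = p := by
    rw [← Function.mem_support, ← hfin.mem_toFinset, hp, Finset.mem_singleton]
  refine ⟨p, (eq_single_one_iff_of_binary hf).2 fun v => ?_⟩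
  rw [← hsupp v]
  exact ⟨fun h => h ▸ one_ne_zero, (hf v).resolve_left⟩

end Binary

theorem finsum_pi_single {V R : Type*} [DecidableEq V] [AddCommMonoid R] (p : V) (r : R) :
    ∑ᶠ v, (Pi.single p r : V → R) v = r := by
  rw [finsum_eq_single _ p fun v hv => by simp [hv], Pi.single_eq_same]

/-- A nonnegative flow `f` along the edges of a locally finite directed graph that moves the mass
distribution `a` to `b`. The graph is given by its finite sets of out-neighbors `succ` and
in-neighbors `pred`, whose compatibility is a separate assumption; values of `f` off the edges are
irrelevant. -/
structure IsTransport {V R : Type*} [AddCommMonoid R] [LE R] (succ pred : V → Finset V)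
    (a b : V → R) (f : V → V → R) : Prop where
  nonneg : ∀ u, ∀ v ∈ succ u, 0 ≤ f u v
  out_eq : ∀ u, a u = ∑ v ∈ succ u, f u v
  in_eq : ∀ v, b v = ∑ u ∈ pred v, f u v

namespace IsTransport

variable {V R : Type*} {succ pred : V → Finset V} {a b : V → R} {f : V → V → R}
  [AddCommMonoid R] [PartialOrder R] [AddLeftMono R]

theorem flow_eq_zero_of_target_eq_zero (h : IsTransport succ pred a b f)
    (hsp : ∀ u v, v ∈ succ u ↔ u ∈ pred v) {u v : V} (huv : v ∈ succ u)
    (hb : b v = 0) : f u v = 0 := by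
  have hnonneg : ∀ w ∈ pred v, 0 ≤ f w v := fun w hw => h.nonneg w v ((hsp w v).2 hw)
  rw [h.in_eq v, Finset.sum_eq_zero_iff_of_nonneg hnonneg] at hb
  exact hb u ((hsp u v).1 huv)

variable [DecidableEq V] {p : V} {r : R}

theorem source_eq_flow_of_target_single (h : IsTransport succ pred a (Pi.single p r) f)
    (hsp : ∀ u v, v ∈ succ u ↔ u ∈ pred v) (u : V) :
    a u = if p ∈ succ u then f u p else 0 := by
  have hzero : ∀ v ∈ succ u, v ≠ p → f u v = 0 := fun v hv hvp =>
    h.flow_eq_zero_of_target_eq_zero hsp hv (by simp [hvp])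
  rw [h.out_eq u]
  split_ifs with hp
  · exact Finset.sum_eq_single_of_mem p hp hzero
  · exact Finset.sum_eq_zero fun v hv => hzero v hv (ne_of_mem_of_not_mem hv hp)

theorem mem_succ_of_source_ne_zero (h : IsTransport succ pred a (Pi.single p r) f)
    (hsp : ∀ u v, v ∈ succ u ↔ u ∈ pred v) {u : V} (hu : a u ≠ 0) : p ∈ succ u := by
  contrapose! hu
  rw [h.source_eq_flow_of_target_single hsp, if_neg hu]

theorem finsum_source_eq (h : IsTransport succ pred a (Pi.single p r) f)
    (hsp : ∀ u v, v ∈ succ u ↔ u ∈ pred v) : ∑ᶠ u, a u = r := by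
  have hsupp : a.support ⊆ pred p := fun u hu =>
    (hsp u p).1 (h.mem_succ_of_source_ne_zero hsp hu)
  calc ∑ᶠ u, a u = ∑ u ∈ pred p, a u := finsum_eq_sum_of_support_subset a hsupp
    _ = ∑ u ∈ pred p, f u p := Finset.sum_congr rfl fun u hu => by
      rw [h.source_eq_flow_of_target_single hsp, if_pos ((hsp u p).2 hu)]
    _ = r := by rw [← h.in_eq p, Pi.single_eq_same]

end IsTransport

section Path

variable {V R : Type*} [AddCommMonoidWithOne R] [CharZero R] [PartialOrder R]
  [AddLeftMono R] {succ pred : V → Finset V} {v₀ : V} {τ : ℕ}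

theorem exists_eq_single_one_of_isTransport [DecidableEq V]
    (hsp : ∀ u v, v ∈ succ u ↔ u ∈ pred v) {x : ℕ → V → R} {y : ℕ → V → V → R}
    (hx : ∀ t ≤ τ, ∀ v, x t v = 0 ∨ x t v = 1)
    (hxy : ∀ t < τ, IsTransport succ pred (x t) (x (t + 1)) (y t))
    (hgoal : ∑ᶠ v, x τ v = 1) {t : ℕ} (ht : t ≤ τ) : ∃ p, x t = Pi.single p 1 := by
  induction ht using Nat.decreasingInduction with
  | self => exact exists_eq_single_one_of_finsum_eq_one (hx τ le_rfl) hgoal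
  | of_succ t ht ih =>
    obtain ⟨p, hp⟩ := ih
    exact exists_eq_single_one_of_finsum_eq_one (hx t ht.le)
      ((hp ▸ hxy t ht).finsum_source_eq hsp)

theorem exists_path_of_isTransport
    (hsp : ∀ u v, v ∈ succ u ↔ u ∈ pred v) {x : ℕ → V → R} {y : ℕ → V → V → R}
    (hx : ∀ t ≤ τ, ∀ v, x t v = 0 ∨ x t v = 1)
    (hxy : ∀ t < τ, IsTransport succ pred (x t) (x (t + 1)) (y t))
    (hstart : x 0 v₀ = 1) (hgoal : ∑ᶠ v, x τ v = 1) :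
    ∃ π : ℕ → V, (∀ t ≤ τ, ∀ v, x t v = 1 ↔ v = π t) ∧ π 0 = v₀ ∧
      ∀ t < τ, π (t + 1) ∈ succ (π t) := by
  classical
  have : Nonempty V := ⟨v₀⟩
  choose! π hπ using fun t (ht : t ≤ τ) =>
    exists_eq_single_one_of_isTransport hsp hx hxy hgoal ht
  have hx_iff (t : ℕ) (ht : t ≤ τ) : ∀ v, x t v = 1 ↔ v = π t :=
    (eq_single_one_iff_of_binary (hx t ht)).1 (hπ t ht)
  refine ⟨π, hx_iff, ((hx_iff 0 τ.zero_le v₀).1 hstart).symm, fun t ht => ?_⟩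
  have hmove : IsTransport succ pred (x t) (Pi.single (π (t + 1)) 1) (y t) :=
    hπ (t + 1) ht ▸ hxy t ht
  have hmass : x t (π t) = 1 := (hx_iff t ht.le _).2 rfl
  exact hmove.mem_succ_of_source_ne_zero hsp (hmass ▸ one_ne_zero)

end Path

section PathFlow

variable {V R : Type*} [DecidableEq V] {p q u v : V}

theorem single_single_apply [Zero R] (r : R) :
    (Pi.single p (Pi.single q r) : V → V → R) u v = if u = p ∧ v = q then r else 0 := by
  simp only [Pi.single_apply, ite_apply, Pi.zero_apply, ite_and]

theorem sum_single_single_out [AddCommMonoid R] {s : Finset V} (r : R) (h : u = p → q ∈ s) :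
    ∑ w ∈ s, (Pi.single p (Pi.single q r) : V → V → R) u w = (Pi.single p r : V → R) u := by
  by_cases hu : u = p
  · simp [single_single_apply, hu, h hu]
  · simp [single_single_apply, hu]

theorem sum_single_single_in [AddCommMonoid R] {s : Finset V} (r : R) (h : v = q → p ∈ s) :
    ∑ w ∈ s, (Pi.single p (Pi.single q r) : V → V → R) w v = (Pi.single q r : V → R) v := by
  by_cases hv : v = q
  · simp [single_single_apply, hv, h hv]
  · simp [single_single_apply, hv]

end PathFlow

/-- `∑ᶠ` is `0` on functions of infinite support, so `∑ᶠ v, x τ v = 1` includes the finiteness of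
the support of `x τ`. -/
theorem milp_path_constraints_characterize_search_paths_general
    {V R : Type*} [AddCommMonoidWithOne R] [CharZero R] [PartialOrder R]
    [AddLeftMono R] (succ pred : V → Finset V) (hsp : ∀ u v, v ∈ succ u ↔ u ∈ pred v)
    (v₀ : V) (τ : ℕ) :
    (∀ (x : ℕ → V → R) (y : ℕ → V → V → R),
      (∀ t ≤ τ, ∀ v, x t v = 0 ∨ x t v = 1) →
      (∀ t < τ, ∀ u, ∀ v ∈ succ u, 0 ≤ y t u v) →
      x 0 v₀ = 1 →
      (∀ t < τ, ∀ v, x t v = ∑ i ∈ succ v, y t v i) →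
      (∀ t, 0 < t → t ≤ τ → ∀ v, x t v = ∑ j ∈ pred v, y (t - 1) j v) →
      ∑ᶠ v, x τ v = 1 →
      ∃ π : ℕ → V, (∀ t ≤ τ, ∀ v, x t v = 1 ↔ v = π t) ∧ π 0 = v₀ ∧
        ∀ t < τ, π (t + 1) ∈ succ (π t)) ∧
    (∀ π : ℕ → V, π 0 = v₀ → (∀ t < τ, π (t + 1) ∈ succ (π t)) →
      ∃ (x : ℕ → V → R) (y : ℕ → V → V → R),
        (∀ t ≤ τ, ∀ v, x t v = 0 ∨ x t v = 1) ∧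
        (∀ t < τ, ∀ u v, y t u v = 0 ∨ y t u v = 1) ∧
        (∀ t < τ, ∀ u, ∀ v ∉ succ u, y t u v = 0) ∧
        x 0 v₀ = 1 ∧
        (∀ t < τ, ∀ v, x t v = ∑ i ∈ succ v, y t v i) ∧
        (∀ t, 0 < t → t ≤ τ → ∀ v, x t v = ∑ j ∈ pred v, y (t - 1) j v) ∧
        ∑ᶠ v, x τ v = 1 ∧
        (∀ t ≤ τ, ∀ v, x t v = 1 ↔ v = π t)) := by
  refine ⟨fun x y hx hy hstart hout hin hgoal => ?_, fun π hstart hπ => ?_⟩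
  · exact exists_path_of_isTransport hsp hx
      (fun t ht => ⟨hy t ht, hout t ht, hin (t + 1) t.succ_pos ht⟩) hstart hgoal
  · classical
    have hx (t : ℕ) (v : V) :
        (Pi.single (π t) 1 : V → R) v = 0 ∨ (Pi.single (π t) 1 : V → R) v = 1 := by
      rw [Pi.single_apply]
      exact (ite_eq_or_eq _ _ _).symm
    refine ⟨fun t => Pi.single (π t) 1, fun t => Pi.single (π t) (Pi.single (π (t + 1)) 1),
      fun t _ => hx t, fun t _ u v => ?_, fun t ht u v hv => ?_, by simp [hstart],
      fun t ht v => (sum_single_single_out 1 fun hv => hv ▸ hπ t ht).symm, ?_,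
      finsum_pi_single (π τ) 1, fun t _ => (eq_single_one_iff_of_binary (hx t)).1 rfl⟩
    · simp only [single_single_apply]
      exact (ite_eq_or_eq _ _ _).symm
    · simp only [single_single_apply]
      refine if_neg ?_
      rintro ⟨rfl, rfl⟩
      exact hv (hπ t ht)
    · rintro (_ | t) hpos ht v
      · exact absurd hpos (lt_irrefl 0)
      · exact (sum_single_single_in 1 fun hv => hv ▸ (hsp _ _).1 (hπ t ht)).symm

/-- The MILP path constraints (unit start, flow conservation through closed
neighborhoods, and unit flow into the dummy goal at time `τ`) on binary variables
`x`, `y` characterize exactly the search paths of length `τ` starting at `v₀`: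
a search path is a vertex sequence in which at each step the searcher stays put or
moves along an edge. -/
theorem milp_path_constraints_characterize_search_paths
    {V : Type*} [Fintype V] [DecidableEq V]
    (G : SimpleGraph V) [DecidableRel G.Adj]
    (v₀ : V) (τ : ℕ) (hτ : 1 ≤ τ) :
    -- closed neighborhood δ'(v)
    ∀ nbhd : V → Finset V, (∀ v, nbhd v = insert v (G.neighborFinset v)) →
    ( -- forward direction: any binary solution of (i)-(iv) encodes a search path
      (∀ (x : ℕ → V → ℝ) (y : ℕ → V → V → ℝ),
        (∀ t ≤ τ, ∀ v, x t v = 0 ∨ x t v = 1) →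
        (∀ t < τ, ∀ u v, y t u v = 0 ∨ y t u v = 1) →
        (∀ t < τ, ∀ u : V, ∀ v ∉ nbhd u, y t u v = 0) →
        -- (i) the searcher starts at v₀
        x 0 v₀ = 1 →
        -- (ii) outgoing flow
        (∀ t < τ, ∀ v : V, x t v = ∑ i ∈ nbhd v, y t v i) →
        -- (iii) incoming flow
        (∀ t, 0 < t → t ≤ τ → ∀ v : V, x t v = ∑ j ∈ nbhd v, y (t - 1) j v) →
        -- (iv) unit flow into the dummy goal
        (∑ v : V, x τ v = 1) →
        ∃ π : ℕ → V,
          (∀ t ≤ τ, ∀ v : V, (x t v = 1 ↔ v = π t)) ∧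
          π 0 = v₀ ∧
          (∀ t < τ, π (t + 1) = π t ∨ G.Adj (π t) (π (t + 1)))) ∧
      -- converse: every search path is encoded by a binary solution of (i)-(iv)
      (∀ π : ℕ → V, π 0 = v₀ →
        (∀ t < τ, π (t + 1) = π t ∨ G.Adj (π t) (π (t + 1))) →
        ∃ (x : ℕ → V → ℝ) (y : ℕ → V → V → ℝ),
          (∀ t ≤ τ, ∀ v, x t v = 0 ∨ x t v = 1) ∧
          (∀ t < τ, ∀ u v, y t u v = 0 ∨ y t u v = 1) ∧
          (∀ t < τ, ∀ u : V, ∀ v ∉ nbhd u, y t u v = 0) ∧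
          x 0 v₀ = 1 ∧
          (∀ t < τ, ∀ v : V, x t v = ∑ i ∈ nbhd v, y t v i) ∧
          (∀ t, 0 < t → t ≤ τ → ∀ v : V, x t v = ∑ j ∈ nbhd v, y (t - 1) j v) ∧
          (∑ v : V, x τ v = 1) ∧
          (∀ t ≤ τ, ∀ v : V, (x t v = 1 ↔ v = π t)))) := by
  intro nbhd hnbhd
  have hmem (u v : V) : v ∈ nbhd u ↔ v = u ∨ G.Adj u v := by simp [hnbhd]
  have hsymm (u v : V) : v ∈ nbhd u ↔ u ∈ nbhd v := by rw [hmem, hmem, eq_comm, G.adj_comm]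
  obtain ⟨hforward, hconverse⟩ :=
    milp_path_constraints_characterize_search_paths_general (R := ℝ) nbhd nbhd hsymm v₀ τ
  simp_rw [← hmem, ← finsum_eq_sum_of_fintype]
  exact ⟨fun x y hx hy _ => hforward x y hx fun t ht u v _ =>
    (hy t ht u v).elim Eq.ge fun h => h ▸ zero_le_one, hconverse⟩
end

section
/- Fix an integer n ≥ 2 and γ ∈ (0,1]. For every sequence w = (w_0,…,w_{n−1}) of vertices from {1,…,n} with w_0 = 1 (not necessarily injective), the discounted reward satisfies F(w) ≤ B; moreover F(w) = B if and only if w is injective and w_{n−1} = n. In particular, the maximum discounted reward over length-(n−1) searcher trajectories starting at vertex 1 is attained exactly by those that visit every vertex exactly once and visit the lowest-probability vertex n last. -/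
/-- The initial target-location belief of the 2HP reduction on vertices `1, …, n`:
`b(1) = 0`, `b(n) = 1/(n−1)²`, and `b(v) = c := 1/(n−1) + 1/(n−1)²` otherwise. -/
noncomputable def bfun (n : ℕ) (v : ℕ) : ℝ :=
  if v = 1 then 0
  else if v = n then 1 / ((n : ℝ) - 1) ^ 2
  else 1 / ((n : ℝ) - 1) + 1 / ((n : ℝ) - 1) ^ 2

/-- The discounted reward of a searcher trajectory `w₀, …, w_{n−1}`:
`F(w) = Σ_{t=0}^{n−1} γᵗ Σ_{v ∈ {w₀,…,w_t}} b(v)`, each distinct visited vertex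
counted once. -/
noncomputable def reward (n : ℕ) (γ : ℝ) (b : ℕ → ℝ) (w : ℕ → ℕ) : ℝ :=
  ∑ t ∈ Finset.range n, γ ^ t * ∑ v ∈ Finset.image w (Finset.range (t + 1)), b v

/-- The bound value `B = Σ_{t=0}^{n−2} γᵗ·t·c + γ^{n−1}·((n−2)·c + 1/(n−1)²)`. -/
noncomputable def Bval (n : ℕ) (γ : ℝ) : ℝ :=
  (∑ t ∈ Finset.range (n - 1),
      γ ^ t * t * (1 / ((n : ℝ) - 1) + 1 / ((n : ℝ) - 1) ^ 2)) +
    γ ^ (n - 1) *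
      (((n : ℝ) - 2) * (1 / ((n : ℝ) - 1) + 1 / ((n : ℝ) - 1) ^ 2) +
        1 / ((n : ℝ) - 1) ^ 2)

/-!
By time `t` at most `t` vertices other than the start have been collected, each worth at most `c`,
so the belief collected is at most `t * c`, strictly less once the cheap vertex `n` is among them;
an optimal trajectory therefore avoids `n` before the final time. At the final time the collected
belief is at most the total belief `(n - 2) * c + b n` of all vertices, with equality only if every
vertex has been visited, which in `n` steps forces the trajectory to be injective.
-/

open Finset

theorem sum_mul_eq_sum_mul_iff_of_le {ι R : Type*} [Semiring R] [LinearOrder R]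
    [IsStrictOrderedRing R] {I : Finset ι} {p f g : ι → R} (hp : ∀ i ∈ I, 0 < p i)
    (hfg : ∀ i ∈ I, f i ≤ g i) :
    ∑ i ∈ I, p i * f i = ∑ i ∈ I, p i * g i ↔ ∀ i ∈ I, f i = g i := by
  rw [sum_eq_sum_iff_of_le fun i hi ↦ mul_le_mul_of_nonneg_left (hfg i hi) (hp i hi).le]
  exact forall₂_congr fun i hi ↦ mul_left_cancel_iff_of_pos (hp i hi)

/-- A belief `b` on the vertex set `V` vanishing at the start `s`, equal to `d` at the cheapest
other vertex `l`, and equal to `c > d > 0` elsewhere; it abstracts `bfun`. -/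
structure IsTwoTierBelief {α R : Type*} [Zero R] [LT R]
    (V : Finset α) (s l : α) (b : α → R) (c d : R) : Prop where
  start_mem : s ∈ V
  last_mem : l ∈ V
  start_eq : b s = 0
  last_eq : b l = d
  eq_of_ne : ∀ v ∈ V, v ≠ s → v ≠ l → b v = c
  pos : 0 < d
  lt : d < c

namespace IsTwoTierBelief

variable {α R : Type*} {V A : Finset α} {s l : α} {b : α → R} {c d : R}

theorem start_ne_last [Zero R] [Preorder R] (hb : IsTwoTierBelief V s l b c d) : s ≠ l := by
  rintro rfl
  exact hb.pos.ne (hb.start_eq.symm.trans hb.last_eq)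

theorem tier_pos [Zero R] [Preorder R] (hb : IsTwoTierBelief V s l b c d) : 0 < c :=
  hb.pos.trans hb.lt

theorem pos_of_ne [Zero R] [Preorder R] (hb : IsTwoTierBelief V s l b c d) {v : α} (hv : v ∈ V)
    (hvs : v ≠ s) : 0 < b v := by
  obtain rfl | hvl := eq_or_ne v l
  · exact hb.last_eq ▸ hb.pos
  · exact hb.eq_of_ne v hv hvs hvl ▸ hb.tier_pos

section AddCommMonoid

variable [AddCommMonoid R] [PartialOrder R] [IsOrderedCancelAddMonoid R]

theorem sum_le_of_subset (hb : IsTwoTierBelief V s l b c d) (hAV : A ⊆ V) :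
    ∑ v ∈ A, b v ≤ ∑ v ∈ V, b v := by
  refine sum_le_sum_of_subset_of_nonneg hAV fun v hv _ ↦ ?_
  obtain rfl | hvs := eq_or_ne v s
  · exact hb.start_eq.ge
  · exact (hb.pos_of_ne hv hvs).le

theorem sum_eq_iff_of_subset (hb : IsTwoTierBelief V s l b c d) (hAV : A ⊆ V) (hs : s ∈ A) :
    ∑ v ∈ A, b v = ∑ v ∈ V, b v ↔ A = V := by
  classical
  refine ⟨fun hsum ↦ hAV.antisymm fun v hv ↦ ?_, fun h ↦ h ▸ rfl⟩
  by_contra hvA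
  have hlt : ∑ u ∈ A, b u < ∑ u ∈ insert v A, b u := by
    rw [sum_insert hvA]
    exact lt_add_of_pos_left _ (hb.pos_of_ne hv (ne_of_mem_of_not_mem hs hvA).symm)
  exact (hlt.trans_le (hb.sum_le_of_subset (insert_subset hv hAV))).ne hsum

end AddCommMonoid

section Ring

variable [Ring R] [PartialOrder R]

theorem sum_eq_of_last_notMem (hb : IsTwoTierBelief V s l b c d) (hAV : A ⊆ V) (hs : s ∈ A)
    (hl : l ∉ A) : ∑ v ∈ A, b v = ((#A : R) - 1) * c := by
  classical
  have tier_eq : ∀ v ∈ A.erase s, b v = c := fun v hv ↦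
    hb.eq_of_ne v (hAV (mem_of_mem_erase hv)) (ne_of_mem_erase hv)
      (ne_of_mem_of_not_mem (mem_of_mem_erase hv) hl)
  rw [← sum_erase A hb.start_eq, sum_eq_card_nsmul tier_eq, nsmul_eq_mul, cast_card_erase_of_mem hs]

theorem sum_eq_of_last_mem (hb : IsTwoTierBelief V s l b c d) (hAV : A ⊆ V) (hs : s ∈ A)
    (hl : l ∈ A) : ∑ v ∈ A, b v = ((#A : R) - 2) * c + d := by
  classical
  rw [← sum_erase_add A b hl, hb.last_eq,
    hb.sum_eq_of_last_notMem ((erase_subset l A).trans hAV)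
      (mem_erase.2 ⟨hb.start_ne_last, hs⟩) (notMem_erase l A),
    cast_card_erase_of_mem hl, sub_sub, one_add_one_eq_two]

theorem sum_lt_of_last_mem [IsStrictOrderedRing R] (hb : IsTwoTierBelief V s l b c d)
    (hAV : A ⊆ V) (hs : s ∈ A) (hl : l ∈ A) : ∑ v ∈ A, b v < ((#A : R) - 1) * c := by
  calc
    ∑ v ∈ A, b v = ((#A : R) - 2) * c + d := hb.sum_eq_of_last_mem hAV hs hl
    _ < ((#A : R) - 2) * c + c := by gcongr; exact hb.lt
    _ = ((#A : R) - 1) * c := by noncomm_ring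

end Ring

end IsTwoTierBelief

/-- The vertices met by the trajectory `w` at times `0, …, t`. -/
def visited {α : Type*} [DecidableEq α] (w : ℕ → α) (t : ℕ) : Finset α :=
  (range (t + 1)).image w

section Trajectory

variable {α : Type*} [DecidableEq α] {V : Finset α} {w : ℕ → α} {m t : ℕ}

theorem mem_visited {v : α} : v ∈ visited w t ↔ ∃ i ≤ t, w i = v := by
  simp [visited]

theorem start_mem_visited (w : ℕ → α) (t : ℕ) : w 0 ∈ visited w t :=
  mem_visited.2 ⟨0, t.zero_le, rfl⟩

theorem visited_subset (hw : ∀ i ≤ t, w i ∈ V) : visited w t ⊆ V := by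
  intro v hv
  obtain ⟨i, hi, rfl⟩ := mem_visited.1 hv
  exact hw i hi

theorem card_visited_le (w : ℕ → α) (t : ℕ) : #(visited w t) ≤ t + 1 :=
  card_image_le.trans_eq (card_range _)

theorem card_visited_eq_iff : #(visited w t) = t + 1 ↔ Set.InjOn w (Set.Iio (t + 1)) := by
  rw [← coe_range, ← card_image_iff, card_range, visited]

theorem visited_eq_iff_injOn (hcard : #V = m + 1) (hw : ∀ i ≤ m, w i ∈ V) :
    visited w m = V ↔ Set.InjOn w (Set.Iio (m + 1)) := by
  rw [← card_visited_eq_iff, ← hcard]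
  exact ⟨congrArg card, fun h ↦ eq_of_subset_of_card_le (visited_subset hw) h.ge⟩

theorem forall_notMem_visited_iff {l : α} (hinj : Set.InjOn w (Set.Iio (m + 1)))
    (hl : l ∈ visited w m) : (∀ t < m, l ∉ visited w t) ↔ w m = l := by
  constructor
  · intro hnot
    obtain ⟨i, him, hwi⟩ := mem_visited.1 hl
    obtain rfl | hlt := him.eq_or_lt
    · exact hwi
    · exact absurd (mem_visited.2 ⟨i, le_rfl, hwi⟩) (hnot i hlt)
  · rintro rfl t ht hmem
    obtain ⟨i, hit, hwi⟩ := mem_visited.1 hmem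
    have him : i < m := hit.trans_lt ht
    exact him.ne (hinj (him.trans m.lt_succ_self) m.lt_succ_self hwi)

theorem card_visited_sub_one_mul_le {R : Type*} [Ring R] [PartialOrder R] [IsOrderedRing R] {c : R}
    (hc : 0 ≤ c) (w : ℕ → α) (t : ℕ) : ((#(visited w t) : R) - 1) * c ≤ t * c := by
  have hcard : (#(visited w t) : R) ≤ t + 1 := by
    simpa only [Nat.cast_succ] using Nat.mono_cast (α := R) (card_visited_le w t)
  exact mul_le_mul_of_nonneg_right (sub_le_iff_le_add.2 hcard) hc

end Trajectory

namespace IsTwoTierBelief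

variable {α R : Type*} [DecidableEq α] [Ring R] [PartialOrder R] [IsStrictOrderedRing R]
  {V : Finset α} {l : α} {b : α → R} {c d : R} {w : ℕ → α} {m t : ℕ}

theorem sum_visited_lt_of_last_mem (hb : IsTwoTierBelief V (w 0) l b c d)
    (hw : ∀ i ≤ t, w i ∈ V) (hl : l ∈ visited w t) : ∑ v ∈ visited w t, b v < t * c :=
  (hb.sum_lt_of_last_mem (visited_subset hw) (start_mem_visited w t) hl).trans_le
    (card_visited_sub_one_mul_le hb.tier_pos.le w t)

theorem sum_visited_le (hb : IsTwoTierBelief V (w 0) l b c d) (hw : ∀ i ≤ t, w i ∈ V) :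
    ∑ v ∈ visited w t, b v ≤ t * c := by
  by_cases hl : l ∈ visited w t
  · exact (hb.sum_visited_lt_of_last_mem hw hl).le
  · exact (hb.sum_eq_of_last_notMem (visited_subset hw) (start_mem_visited w t) hl).trans_le
      (card_visited_sub_one_mul_le hb.tier_pos.le w t)

theorem sum_visited_eq_iff_of_injOn (hb : IsTwoTierBelief V (w 0) l b c d)
    (hw : ∀ i ≤ t, w i ∈ V) (hinj : Set.InjOn w (Set.Iio (t + 1))) :
    ∑ v ∈ visited w t, b v = t * c ↔ l ∉ visited w t := by
  refine ⟨fun hsum hl ↦ (hb.sum_visited_lt_of_last_mem hw hl).ne hsum, fun hl ↦ ?_⟩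
  rw [hb.sum_eq_of_last_notMem (visited_subset hw) (start_mem_visited w t) hl,
    card_visited_eq_iff.2 hinj, Nat.cast_succ, add_sub_cancel_right]

theorem sum_visited_eq_bounds_iff (hb : IsTwoTierBelief V (w 0) l b c d) (hcard : #V = m + 1)
    (hw : ∀ i ≤ m, w i ∈ V) :
    ((∀ t < m, ∑ v ∈ visited w t, b v = t * c) ∧ ∑ v ∈ visited w m, b v = ∑ v ∈ V, b v) ↔
      Set.InjOn w (Set.Iio (m + 1)) ∧ w m = l := by
  rw [hb.sum_eq_iff_of_subset (visited_subset hw) (start_mem_visited w m),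
    visited_eq_iff_injOn hcard hw, and_comm]
  refine and_congr_right fun hinj ↦ ?_
  have hl : l ∈ visited w m := (visited_eq_iff_injOn hcard hw).2 hinj ▸ hb.last_mem
  rw [← forall_notMem_visited_iff hinj hl]
  exact forall₂_congr fun t ht ↦
    hb.sum_visited_eq_iff_of_injOn (fun i hi ↦ hw i (hi.trans ht.le))
      (hinj.mono (Set.Iio_subset_Iio (Nat.succ_le_succ ht.le)))

end IsTwoTierBelief

theorem reward_le_B_iff_hamiltonian_ordering_general {α R : Type*} [DecidableEq α] [Ring R]
    [LinearOrder R] [IsStrictOrderedRing R] {V : Finset α} {s l : α} {b : α → R} {c d : R}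
    (hb : IsTwoTierBelief V s l b c d) {n : ℕ} (hcard : #V = n) {p : ℕ → R}
    (hp : ∀ t < n, 0 < p t) {w : ℕ → α} (hw : ∀ t < n, w t ∈ V) (hw0 : w 0 = s) :
    ∑ t ∈ range n, p t * ∑ v ∈ (range (t + 1)).image w, b v ≤
        ∑ t ∈ range (n - 1), p t * t * c + p (n - 1) * (((n : R) - 2) * c + d) ∧
      (∑ t ∈ range n, p t * ∑ v ∈ (range (t + 1)).image w, b v =
          ∑ t ∈ range (n - 1), p t * t * c + p (n - 1) * (((n : R) - 2) * c + d) ↔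
        Set.InjOn w (Set.Iio n) ∧ w (n - 1) = l) := by
  subst hw0
  obtain ⟨m, rfl⟩ : ∃ m, n = m + 1 :=
    Nat.exists_eq_succ_of_ne_zero (hcard ▸ card_ne_zero_of_mem hb.last_mem)
  have hwm : ∀ i ≤ m, w i ∈ V := fun i hi ↦ hw i (Nat.lt_succ_of_le hi)
  have early_le : ∀ t ∈ range m, ∑ v ∈ visited w t, b v ≤ t * c := fun t ht ↦
    hb.sum_visited_le fun i hi ↦ hwm i (hi.trans (mem_range.1 ht).le)
  have early_pos : ∀ t ∈ range m, 0 < p t := fun t ht ↦ hp t (Nat.lt_succ_of_lt (mem_range.1 ht))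
  have final_le := hb.sum_le_of_subset (visited_subset hwm)
  have final_pos := hp m m.lt_succ_self
  have total : ((m + 1 : ℕ) - 2 : R) * c + d = ∑ v ∈ V, b v := by
    rw [hb.sum_eq_of_last_mem subset_rfl hb.start_mem hb.last_mem, hcard]
  have early_sum_le := sum_le_sum fun t ht ↦
    mul_le_mul_of_nonneg_left (early_le t ht) (early_pos t ht).le
  have final_mul_le := mul_le_mul_of_nonneg_left final_le final_pos.le
  simp only [← visited.eq_def, Nat.add_sub_cancel, mul_assoc, total, sum_range_succ _ m]
  refine ⟨add_le_add early_sum_le final_mul_le, ?_⟩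
  rw [add_eq_add_iff_eq_and_eq early_sum_le final_mul_le,
    sum_mul_eq_sum_mul_iff_of_le early_pos early_le, mul_left_cancel_iff_of_pos final_pos,
    ← hb.sum_visited_eq_bounds_iff hcard hwm]
  simp only [mem_range]

theorem isTwoTierBelief_bfun {n : ℕ} (hn : 2 ≤ n) :
    IsTwoTierBelief (Icc 1 n) 1 n (bfun n) (1 / ((n : ℝ) - 1) + 1 / ((n : ℝ) - 1) ^ 2)
      (1 / ((n : ℝ) - 1) ^ 2) where
  start_mem := mem_Icc.2 ⟨le_rfl, by lia⟩
  last_mem := mem_Icc.2 ⟨by lia, le_rfl⟩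
  start_eq := if_pos rfl
  last_eq := by rw [bfun, if_neg (by lia), if_pos rfl]
  eq_of_ne v _ hv1 hvn := by rw [bfun, if_neg hv1, if_neg hvn]
  pos := by
    have hn1 : (0 : ℝ) < n - 1 := sub_pos.2 (mod_cast hn)
    positivity
  lt := lt_add_of_pos_left _ (one_div_pos.2 (sub_pos.2 (mod_cast hn)))

/-- For every (not necessarily injective) sequence `w₀, …, w_{n−1}` of vertices from
`{1, …, n}` with `w₀ = 1`, the discounted reward satisfies `F(w) ≤ B`, with equality
iff `w` is injective and `w_{n−1} = n`: the maximum is attained exactly by the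
trajectories visiting every vertex exactly once with the lowest-probability vertex
`n` last. -/
theorem reward_le_B_iff_hamiltonian_ordering (n : ℕ) (hn : 2 ≤ n)
    (γ : ℝ) (hγ : γ ∈ Set.Ioc (0 : ℝ) 1)
    (w : ℕ → ℕ)
    (hw_range : ∀ t < n, w t ∈ Finset.Icc 1 n)
    (hw0 : w 0 = 1) :
    reward n γ (bfun n) w ≤ Bval n γ ∧
    (reward n γ (bfun n) w = Bval n γ ↔
      ((∀ s < n, ∀ t < n, w s = w t → s = t) ∧ w (n - 1) = n)) :=
  reward_le_B_iff_hamiltonian_ordering_general (isTwoTierBelief_bfun hn) (Nat.card_Icc 1 n)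
    (fun t _ ↦ pow_pos hγ.1 t) hw_range hw0
end
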